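/- Let r > 0, a > 0, b > 0, and let x, y : ℝ → ℝ be differentiable functions with x(t) ≠ 0 for all t, satisfying x'(t) = −r·x(t)·y(t) and y'(t) = x(t) − a·b/x(t) for all t ∈ ℝ, with x(0) = a and y(0) = 0. Then the quantity x(t) + a·b/x(t) + (r/2)·y(t)² is conserved: for all t ∈ ℝ, x(t) + a·b/x(t) + (r/2)·y(t)² = a + b. -/

import Mathlib

/-!
The function `x + ab/x + (r/2) y²` is a first integral: its derivative along a solution vanishes
identically, so it is constant on `ℝ`, and its value at `t = 0` is `a + ab/a = a + b`.
-/

/-- Conservation law for the planar system `x' = −r x y`, `y' = x − ab/x`: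
the quantity `x + ab/x + (r/2) y²` is conserved and equals `a + b`. -/
theorem planar_system_conserved_quantity (r a b : ℝ) (hr : r > 0)
    (ha : a > 0) (hb : b > 0) (x y : ℝ → ℝ) (hx0 : ∀ t : ℝ, x t ≠ 0)
    (hx : ∀ t : ℝ, HasDerivAt x (-r * x t * y t) t)
    (hy : ∀ t : ℝ, HasDerivAt y (x t - a * b / x t) t)
    (hxa : x 0 = a) (hy0 : y 0 = 0) :
    ∀ t : ℝ, x t + a * b / x t + r / 2 * (y t) ^ 2 = a + b := by
  -- Along a solution the derivative is `(1 - ab/x²)(-r x y) + r y (x - ab/x) = 0`.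
  have hder : ∀ t : ℝ,
      HasDerivAt (fun s => x s + a * b / x s + r / 2 * (y s) ^ 2) 0 t := by
    intro t
    have hne := hx0 t
    have h := ((hx t).add ((hasDerivAt_const t (a * b)).div (hx t) hne)).add
      (((hy t).pow 2).const_mul (r / 2))
    refine h.congr_deriv ?_
    field_simp
    push_cast
    ring
  intro t
  have hconst := is_const_of_deriv_eq_zero (fun s => (hder s).differentiableAt)
    (fun s => (hder s).deriv) t 0
  simp only [hxa, hy0] at hconst
  rw [hconst]
  field_simp
  ring
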